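/- arXiv:1509.08692 — 3 statements merged into one kernel-verified Lean document; each statement's English description precedes it below -/
import Mathlib

section
/- Let d, N, q be natural numbers, let M_0, M_1, …, M_q be real d × N matrices and N_0, N_1, …, N_q ∈ ℝ^d. Then for τ ∈ ℝ^N, θ ∈ ℝ^q and ϑ_1, …, ϑ_q ∈ ℝ^N, the following are equivalent: (a) M_0 τ + Σ_{i=1}^q M_i ϑ_i = N_0 + Σ_{i=1}^q θ_i • N_i and rank H(τ, ϑ, θ) = 1; (b) M_0 τ + Σ_{i=1}^q θ_i • (M_i τ) = N_0 + Σ_{i=1}^q θ_i • N_i and ϑ_i = θ_i • τ for every i = 1, …, q. -/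
/-!
The column `(τ; 1)` of `Hmat τ ϑ θ` is nonzero, so the column space has dimension one exactly when
every other column `(ϑ k; θ k)` is a multiple of it. Comparing last entries, the factor must be
`θ k`, so the rank condition says precisely `ϑ k = θ k • τ` (`rank_Hmat_eq_one_iff`). Under this
relation the linear and the bilinear equations coincide, by linearity of `M k`.
-/

/-- The (N+1) × (q+1) matrix whose 0-th column is (τ; 1) and whose i-th column
(for i = 1, …, q) is (ϑ_i; θ_i). -/
def Hmat {N q : ℕ} (τ : Fin N → ℝ) (ϑ : Fin q → Fin N → ℝ) (θ : Fin q → ℝ) :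
    Matrix (Fin (N + 1)) (Fin (q + 1)) ℝ :=
  Matrix.of fun i =>
    Fin.cons ((Fin.snoc τ (1 : ℝ) : Fin (N + 1) → ℝ) i)
      (fun k => (Fin.snoc (ϑ k) (θ k) : Fin (N + 1) → ℝ) i)

lemma Hmat_col_zero {N q : ℕ} (τ : Fin N → ℝ) (ϑ : Fin q → Fin N → ℝ) (θ : Fin q → ℝ) :
    (Hmat τ ϑ θ).col 0 = (Fin.snoc τ (1 : ℝ) : Fin (N + 1) → ℝ) := by
  ext i
  simp [Hmat, Matrix.col]

lemma Hmat_col_succ {N q : ℕ} (τ : Fin N → ℝ) (ϑ : Fin q → Fin N → ℝ) (θ : Fin q → ℝ)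
    (k : Fin q) :
    (Hmat τ ϑ θ).col k.succ = (Fin.snoc (ϑ k) (θ k) : Fin (N + 1) → ℝ) := by
  ext i
  simp [Hmat, Matrix.col]

lemma rank_Hmat_eq_one_iff {N q : ℕ} (τ : Fin N → ℝ) (ϑ : Fin q → Fin N → ℝ)
    (θ : Fin q → ℝ) :
    (Hmat τ ϑ θ).rank = 1 ↔ ∀ k, ϑ k = θ k • τ := by
  have hne : (Hmat τ ϑ θ).col 0 ≠ 0 := by
    intro h
    rw [Hmat_col_zero] at h
    simpa using congrFun h (Fin.last N)
  rw [Matrix.rank_eq_finrank_span_cols]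
  constructor
  · intro h k
    have hmem : ∀ j, (Hmat τ ϑ θ).col j ∈ Submodule.span ℝ (Set.range (Hmat τ ϑ θ).col) :=
      fun j => Submodule.subset_span ⟨j, rfl⟩
    obtain ⟨c, hc⟩ := (finrank_eq_one_iff_of_nonzero' (⟨_, hmem 0⟩ :
      Submodule.span ℝ (Set.range (Hmat τ ϑ θ).col))
      (fun h0 => hne (congrArg Subtype.val h0))).1 h ⟨_, hmem k.succ⟩
    have hc' : c • (Hmat τ ϑ θ).col 0 = (Hmat τ ϑ θ).col k.succ := congrArg Subtype.val hc
    rw [Hmat_col_zero, Hmat_col_succ] at hc'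
    have hcθ : c = θ k := by simpa using congrFun hc' (Fin.last N)
    ext i
    simpa [hcθ] using (congrFun hc' i.castSucc).symm
  · intro h
    have hspan : Submodule.span ℝ (Set.range (Hmat τ ϑ θ).col) =
        Submodule.span ℝ {(Hmat τ ϑ θ).col 0} := by
      apply le_antisymm
      · rw [Submodule.span_le]
        rintro _ ⟨j, rfl⟩
        refine Fin.cases (Submodule.mem_span_singleton_self _) (fun k => ?_) j
        refine Submodule.mem_span_singleton.2 ⟨θ k, ?_⟩
        rw [Hmat_col_zero, Hmat_col_succ, h k]
        ext i
        refine Fin.lastCases ?_ (fun i => ?_) i <;> simp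
      · exact Submodule.span_mono (by rintro _ rfl; exact ⟨0, rfl⟩)
    rw [hspan, finrank_span_singleton hne]

theorem linear_rank_constrained_iff_bilinear {d N q : ℕ}
    (M₀ : Matrix (Fin d) (Fin N) ℝ) (M : Fin q → Matrix (Fin d) (Fin N) ℝ)
    (N₀ : Fin d → ℝ) (Nv : Fin q → Fin d → ℝ)
    (τ : Fin N → ℝ) (θ : Fin q → ℝ) (ϑ : Fin q → Fin N → ℝ) :
    (M₀.mulVec τ + ∑ i, (M i).mulVec (ϑ i) = N₀ + ∑ i, θ i • Nv i ∧
        (Hmat τ ϑ θ).rank = 1) ↔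
      (M₀.mulVec τ + ∑ i, θ i • (M i).mulVec τ = N₀ + ∑ i, θ i • Nv i ∧
        ∀ i, ϑ i = θ i • τ) := by
  rw [rank_Hmat_eq_one_iff]
  refine and_congr_left fun h => ?_
  simp only [h, Matrix.mulVec_smul]
end

section
/- Let d, N, q be natural numbers, let M_0, M_1, …, M_q be real d × N matrices and N_0, N_1, …, N_q ∈ ℝ^d. Suppose the pair (θ*, τ*) ∈ ℝ^q × ℝ^N is the unique solution of the bilinear equation M_0 τ + Σ_{i=1}^q θ_i • (M_i τ) = N_0 + Σ_{i=1}^q θ_i • N_i. Then the rank-constrained linear system has a unique solution: whenever τ ∈ ℝ^N, θ ∈ ℝ^q and ϑ_1, …, ϑ_q ∈ ℝ^N satisfy M_0 τ + Σ_{i=1}^q M_i ϑ_i = N_0 + Σ_{i=1}^q θ_i • N_i and rank H(τ, ϑ, θ) = 1, one has θ = θ*, τ = τ*, and ϑ_i = θ*_i • τ* for every i = 1, …, q. -/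
/-- The 2 × 2 minor of `H` on rows `j`, `N` and columns `0`, `k + 1` is `τ_j θ_k - ϑ_{k,j}`, and it
vanishes when the rank is at most one. -/
theorem Hmat_col_eq_smul {N q : ℕ} {τ : Fin N → ℝ} {ϑ : Fin q → Fin N → ℝ} {θ : Fin q → ℝ}
    (h : (Hmat τ ϑ θ).rank ≤ 1) (k : Fin q) : ϑ k = θ k • τ := by
  ext j
  by_contra hne
  have hdet : ((Hmat τ ϑ θ).submatrix ![j.castSucc, Fin.last N] ![0, k.succ]).det ≠ 0 := by
    simp only [Matrix.det_fin_two, Matrix.submatrix_apply, Hmat, Matrix.of_apply,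
      Matrix.cons_val_zero, Matrix.cons_val_one, Fin.cons_zero, Fin.cons_succ,
      Fin.snoc_castSucc, Fin.snoc_last]
    intro h0
    apply hne
    simp only [Pi.smul_apply, smul_eq_mul]
    linarith
  have h2 := Matrix.rank_of_det_ne_zero hdet
  have h3 := (Hmat τ ϑ θ).rank_submatrix_le ![j.castSucc, Fin.last N] ![0, k.succ]
  rw [h2, Fintype.card_fin] at h3
  omega

theorem rank_constrained_unique_solution {d N q : ℕ}
    (M₀ : Matrix (Fin d) (Fin N) ℝ) (M : Fin q → Matrix (Fin d) (Fin N) ℝ)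
    (N₀ : Fin d → ℝ) (Nv : Fin q → Fin d → ℝ)
    (θs : Fin q → ℝ) (τs : Fin N → ℝ)
    (hsol : M₀.mulVec τs + ∑ i, θs i • (M i).mulVec τs = N₀ + ∑ i, θs i • Nv i)
    (huniq : ∀ (θ : Fin q → ℝ) (τ : Fin N → ℝ),
        M₀.mulVec τ + ∑ i, θ i • (M i).mulVec τ = N₀ + ∑ i, θ i • Nv i →
        θ = θs ∧ τ = τs) :
    ∀ (τ : Fin N → ℝ) (θ : Fin q → ℝ) (ϑ : Fin q → Fin N → ℝ),
      M₀.mulVec τ + ∑ i, (M i).mulVec (ϑ i) = N₀ + ∑ i, θ i • Nv i →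
      (Hmat τ ϑ θ).rank = 1 →
      θ = θs ∧ τ = τs ∧ ∀ i, ϑ i = θs i • τs := by
  intro τ θ ϑ hlin hrank
  have hϑ : ∀ k, ϑ k = θ k • τ := Hmat_col_eq_smul hrank.le
  simp only [hϑ, Matrix.mulVec_smul] at hlin
  obtain ⟨rfl, rfl⟩ := huniq θ τ hlin
  exact ⟨rfl, rfl, hϑ⟩
end

section
/- Let m, n be natural numbers with n ≥ 1 and let A be a real m × n matrix. Let λ_1, …, λ_n denote the eigenvalues (with multiplicity) of the symmetric positive semidefinite matrix Aᵀ A. Then rank A ≤ 1 if and only if Σ_{i=1}^n √(λ_i) equals max_{i} √(λ_i); equivalently, the sum of all singular values of A equals its largest singular value (i.e., the nuclear norm of A equals its spectral norm) exactly when rank A ≤ 1. -/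
/-!
The rank of `A` equals the rank of `Aᵀ * A`, which is the number of nonzero eigenvalues of that
symmetric matrix. These are nonnegative, so `√λ = 0` exactly when `λ = 0`, and the rank is at most
one iff at most one singular value is nonzero. For a nonnegative family this is equivalent to the
sum being equal to the maximum (`sum_eq_sup'_iff_support_subsingleton`): the sum exceeds the maximum
by the sum of the entries other than a chosen maximal one.
-/

open Matrix

lemma sum_eq_sup'_iff_support_subsingleton {ι : Type*} [Fintype ι]
    (h : (Finset.univ : Finset ι).Nonempty) (f : ι → ℝ) (hf : ∀ i, 0 ≤ f i) :
    ∑ i, f i = Finset.univ.sup' h f ↔ ∀ i j, f i ≠ 0 → f j ≠ 0 → i = j := by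
  classical
  obtain ⟨k, -, hk⟩ := Finset.exists_mem_eq_sup' h f
  have hmax : ∀ i, f i ≤ f k := fun i => hk ▸ Finset.le_sup' f (Finset.mem_univ i)
  rw [hk]
  constructor
  · intro hs
    rw [← Finset.add_sum_erase _ _ (Finset.mem_univ k), add_eq_left,
      Finset.sum_eq_zero_iff_of_nonneg fun i _ => hf i] at hs
    have hz : ∀ i, f i ≠ 0 → i = k := fun i hi => by
      by_contra hik
      exact hi (hs i (Finset.mem_erase.2 ⟨hik, Finset.mem_univ i⟩))
    exact fun i j hi hj => (hz i hi).trans (hz j hj).symm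
  · intro hu
    refine Finset.sum_eq_single k (fun i _ hik => ?_) (fun hc => absurd (Finset.mem_univ k) hc)
    by_contra hi
    have hpos : 0 < f k := ((hf i).lt_of_ne' hi).trans_le (hmax i)
    exact hik (hu i k hi hpos.ne')

theorem rank_le_one_iff_nuclear_eq_spectral {m n : ℕ} (hn : 1 ≤ n)
    (A : Matrix (Fin m) (Fin n) ℝ) (hAA : (Aᵀ * A).IsHermitian) :
    A.rank ≤ 1 ↔
      ∑ i, Real.sqrt (hAA.eigenvalues i) =
        Finset.univ.sup'
          (have : Nonempty (Fin n) := Fin.pos_iff_nonempty.mp hn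
           Finset.univ_nonempty)
          (fun i => Real.sqrt (hAA.eigenvalues i)) := by
  have hpsd : (Aᵀ * A).PosSemidef := by
    simpa using Matrix.posSemidef_conjTranspose_mul_self A
  have hnn : ∀ i, 0 ≤ hAA.eigenvalues i := hpsd.eigenvalues_nonneg
  rw [sum_eq_sup'_iff_support_subsingleton _ _ fun i => Real.sqrt_nonneg _,
    ← rank_transpose_mul_self, hAA.rank_eq_card_non_zero_eigs, Fintype.card_le_one_iff]
  simp only [ne_eq, Real.sqrt_eq_zero (hnn _), Subtype.forall, Subtype.mk.injEq]
  exact ⟨fun h i j hi hj => h i hi j hj, fun h i hi j hj => h i j hi hj⟩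
end
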